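/- Let A ∈ ℝ^{n×n}, B ∈ ℝ^{n×m}, C ∈ ℝ^{p×n}, and assume that the generalized unstable subspace X₊(A) is contained in ker C. Then the Lyapunov equation AᵀX + XA + CᵀC = 0 has at least one symmetric positive semidefinite solution, and among all symmetric positive semidefinite solutions there is exactly one solution X with the property X₊(A) ⊆ ker X. -/

import Mathlib

open Matrix Filter Topology Function
open scoped Kronecker

noncomputable section

/-- Complexification of a real matrix. -/
def cplx {α β : Type*} (M : Matrix α β ℝ) : Matrix α β ℂ := M.map Complex.ofReal

/-- Transfer function `S(s) = C (sI - A)⁻¹ B` of the system `ẋ = Ax + Bu, y = Cx`. -/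
def transfer {n m p : ℕ} (A : Matrix (Fin n) (Fin n) ℝ) (B : Matrix (Fin n) (Fin m) ℝ)
    (C : Matrix (Fin p) (Fin n) ℝ) (s : ℂ) : Matrix (Fin p) (Fin m) ℂ :=
  cplx C * (s • (1 : Matrix (Fin n) (Fin n) ℂ) - cplx A)⁻¹ * cplx B

/-- Squared H₂-norm: `(1/2π) ∫ tr(S(-iω)ᵀ S(iω)) dω`. -/
def H2normSq {α β : Type*} [Fintype α] [Fintype β] (S : ℂ → Matrix α β ℂ) : ℝ :=
  (1 / (2 * Real.pi)) *
    ∫ ω : ℝ, ((S (-((ω : ℂ) * Complex.I)))ᵀ * S ((ω : ℂ) * Complex.I)).trace.re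

/-- Largest singular value of a complex matrix (its ℓ²-operator norm). -/
def sigmaMax {α β : Type*} [Fintype α] [Fintype β] [DecidableEq β] (M : Matrix α β ℂ) : ℝ :=
  ‖LinearMap.toContinuousLinearMap (Matrix.toEuclideanLin M)‖

/-- Smallest singular value of a complex matrix: `√(λ_min(Mᴴ M))`. -/
def sigmaMinC {α β : Type*} [Fintype α] [Fintype β] [DecidableEq β] (M : Matrix α β ℂ) : ℝ :=
  Real.sqrt (sInf (spectrum ℝ (Mᴴ * M)))

/-- H∞-norm: `sup_{ω ∈ ℝ} σ_max(S(iω))`. -/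
def HinfNorm {α β : Type*} [Fintype α] [Fintype β] [DecidableEq β] (S : ℂ → Matrix α β ℂ) : ℝ :=
  ⨆ ω : ℝ, sigmaMax (S ((ω : ℂ) * Complex.I))

/-- Generalized unstable subspace `X₊(A)`: direct sum of the generalized eigenspaces of (the
complexification of) `A` corresponding to eigenvalues with nonnegative real part. -/
def unstableSubspace {n : ℕ} (A : Matrix (Fin n) (Fin n) ℝ) : Submodule ℂ (Fin n → ℂ) :=
  ⨆ μ ∈ {μ : ℂ | 0 ≤ μ.re}, Module.End.maxGenEigenspace (Matrix.toLin' (cplx A)) μ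

/-- A complex square matrix is Hurwitz if all its eigenvalues have negative real part. -/
def IsHurwitz {n : ℕ} (M : Matrix (Fin n) (Fin n) ℂ) : Prop :=
  ∀ μ ∈ spectrum ℂ M, μ.re < 0

/-- Transfer function `S_λ(s) = λ (sI - A + λB)⁻¹ E` of the auxiliary system. -/
def auxS {n r : ℕ} (A B : Matrix (Fin n) (Fin n) ℝ) (E : Matrix (Fin n) (Fin r) ℝ)
    (lam : ℝ) (s : ℂ) : Matrix (Fin n) (Fin r) ℂ :=
  (lam : ℂ) • ((s • (1 : Matrix (Fin n) (Fin n) ℂ) - cplx A + (lam : ℂ) • cplx B)⁻¹ * cplx E)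

/-- Transfer function `S(s) = (L⊗Iₙ)(sI - I_N⊗A + L⊗B)⁻¹(M⊗E)` of the original network. -/
def netS {N n r m : ℕ} (L : Matrix (Fin N) (Fin N) ℝ) (A B : Matrix (Fin n) (Fin n) ℝ)
    (E : Matrix (Fin n) (Fin r) ℝ) (M : Matrix (Fin N) (Fin m) ℝ) (s : ℂ) :
    Matrix (Fin N × Fin n) (Fin m × Fin r) ℂ :=
  cplx (L ⊗ₖ (1 : Matrix (Fin n) (Fin n) ℝ)) *
    (s • (1 : Matrix (Fin N × Fin n) (Fin N × Fin n) ℂ) -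
      cplx ((1 : Matrix (Fin N) (Fin N) ℝ) ⊗ₖ A - L ⊗ₖ B))⁻¹ *
    cplx (M ⊗ₖ E)

/-- Transfer function `Ŝ(s) = (LP⊗Iₙ)(sI - I_k⊗A + L̂⊗B)⁻¹(M̂⊗E)` of the reduced network. -/
def netShat {N n r m k : ℕ} (L : Matrix (Fin N) (Fin N) ℝ) (P : Matrix (Fin N) (Fin k) ℝ)
    (Lhat : Matrix (Fin k) (Fin k) ℝ) (Mhat : Matrix (Fin k) (Fin m) ℝ)
    (A B : Matrix (Fin n) (Fin n) ℝ) (E : Matrix (Fin n) (Fin r) ℝ) (s : ℂ) :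
    Matrix (Fin N × Fin n) (Fin m × Fin r) ℂ :=
  cplx ((L * P) ⊗ₖ (1 : Matrix (Fin n) (Fin n) ℝ)) *
    (s • (1 : Matrix (Fin k × Fin n) (Fin k × Fin n) ℂ) -
      cplx ((1 : Matrix (Fin k) (Fin k) ℝ) ⊗ₖ A - Lhat ⊗ₖ B))⁻¹ *
    cplx (Mhat ⊗ₖ E)

/-- Transfer function `S(s) = L (sI + L)⁻¹ M` of the single-integrator network. -/
def singleS {N m : ℕ} (L : Matrix (Fin N) (Fin N) ℝ) (M : Matrix (Fin N) (Fin m) ℝ)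
    (s : ℂ) : Matrix (Fin N) (Fin m) ℂ :=
  cplx L * (s • (1 : Matrix (Fin N) (Fin N) ℂ) + cplx L)⁻¹ * cplx M

/-- Transfer function `Ŝ(s) = LP (sI + L̂)⁻¹ M̂` of the reduced single-integrator network. -/
def singleShat {N m k : ℕ} (L : Matrix (Fin N) (Fin N) ℝ) (P : Matrix (Fin N) (Fin k) ℝ)
    (Lhat : Matrix (Fin k) (Fin k) ℝ) (Mhat : Matrix (Fin k) (Fin m) ℝ) (s : ℂ) :
    Matrix (Fin N) (Fin m) ℂ :=
  cplx (L * P) * (s • (1 : Matrix (Fin k) (Fin k) ℂ) + cplx Lhat)⁻¹ * cplx Mhat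

/-- Squared Frobenius norm `‖M‖_F² = tr(MᵀM)`. -/
def frobSq {α β : Type*} [Fintype α] [Fintype β] (M : Matrix α β ℝ) : ℝ := (Mᵀ * M).trace

end

/-!
Let `x` solve `ẋ = A x`. If `AᴴX + XA + Q = 0` with `X` Hermitian and `Q ≥ 0`, then `x* X x`
decreases along `x`, so it is nonnegative as soon as `x` decays to `0`. The solutions starting in
the stable subspace of `A` do decay, and a Hermitian `X` vanishing on the unstable subspace is
determined by its form on the stable one; hence such an `X` is positive semidefinite. For `Q = 0`
this applies to `X` and to `-X`, so `X = 0`: the Lyapunov operator `X ↦ AᵀX + XA` is injective on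
the space of real symmetric matrices vanishing on the unstable subspace. It maps this
finite-dimensional space to itself, so it is bijective there, and `-CᵀC` lies in the space by
hypothesis.
-/

section SpectralSubspace

variable {K V : Type*} [Field K] [AddCommGroup V] [Module K V]

/-- The spectral subspace of an endomorphism `f` for a set `S` of scalars: the sum of the
generalized eigenspaces of `f` for the eigenvalues in `S`. With `S` the closed right half-plane
this is the generalized unstable subspace, with `S` the open left half-plane the stable one. -/
def spectralSubspace (f : Module.End K V) (S : Set K) : Submodule K V :=
  ⨆ μ ∈ S, f.maxGenEigenspace μ

lemma spectralSubspace_sup_compl [IsAlgClosed K] [FiniteDimensional K V] (f : Module.End K V)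
    (S : Set K) : spectralSubspace f S ⊔ spectralSubspace f Sᶜ = ⊤ :=
  (iSup_split f.maxGenEigenspace (· ∈ S)).symm.trans f.iSup_maxGenEigenspace_eq_top

lemma map_mem_spectralSubspace {f : Module.End K V} {S : Set K} {v : V}
    (hv : v ∈ spectralSubspace f S) : f v ∈ spectralSubspace f S := by
  suffices h : spectralSubspace f S ≤ (spectralSubspace f S).comap f from h hv
  refine iSup₂_le fun μ hμ u hu => ?_
  exact le_biSup f.maxGenEigenspace hμ (f.mapsTo_maxGenEigenspace_of_comm (Commute.refl f) μ hu)

end SpectralSubspace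

section Trajectories

variable {E : Type*} [NormedAddCommGroup E] [NormedSpace ℂ E]

/-- A global solution `x` of the linear differential equation `ẋ = f x` with `x t → 0` as
`t → ∞`. Solutions are used in place of the operator exponential `t ↦ exp (t f)`. -/
structure IsDecayingTrajectory (f : Module.End ℂ E) (x : ℝ → E) : Prop where
  hasDerivAt : ∀ t, HasDerivAt x (f (x t)) t
  tendsto_zero : Tendsto x atTop (𝓝 0)

namespace IsDecayingTrajectory

variable {f : Module.End ℂ E} {x y : ℝ → E}

lemma zero : IsDecayingTrajectory f 0 where
  hasDerivAt t := (hasDerivAt_const t 0).congr_deriv (map_zero f).symm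
  tendsto_zero := tendsto_const_nhds

lemma add (hx : IsDecayingTrajectory f x) (hy : IsDecayingTrajectory f y) :
    IsDecayingTrajectory f (x + y) where
  hasDerivAt t := ((hx.hasDerivAt t).add (hy.hasDerivAt t)).congr_deriv (map_add f _ _).symm
  tendsto_zero := add_zero (0 : E) ▸ hx.tendsto_zero.add hy.tendsto_zero

end IsDecayingTrajectory

lemma hasDerivAt_ofReal_pow_succ_div_factorial (k : ℕ) (t : ℝ) :
    HasDerivAt (fun t : ℝ => (t : ℂ) ^ (k + 1) / ((k + 1).factorial : ℂ))
      ((t : ℂ) ^ k / (k.factorial : ℂ)) t := by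
  have h := ((hasDerivAt_pow (k + 1) (t : ℂ)).div_const ((k + 1).factorial : ℂ)).comp_ofReal
  refine h.congr_deriv ?_
  have hk : (k : ℂ) + 1 ≠ 0 := by exact_mod_cast k.succ_ne_zero
  rw [Nat.factorial_succ, Nat.add_sub_cancel]
  push_cast
  exact mul_div_mul_left _ _ hk

lemma hasDerivAt_sum_pow_div_factorial_smul (w : ℕ → E) (N : ℕ) (t : ℝ) :
    HasDerivAt
      (fun t : ℝ => ∑ k ∈ Finset.range (N + 1), ((t : ℂ) ^ k / (k.factorial : ℂ)) • w k)
      (∑ k ∈ Finset.range N, ((t : ℂ) ^ k / (k.factorial : ℂ)) • w (k + 1)) t := by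
  simp only [Finset.sum_range_succ' _ N, pow_zero, Nat.factorial_zero, Nat.cast_one, div_one,
    one_smul]
  exact (HasDerivAt.fun_sum fun k _ =>
    (hasDerivAt_ofReal_pow_succ_div_factorial k t).smul_const (w (k + 1))).add_const (w 0)

lemma tendsto_cexp_mul_pow_atTop_nhds_zero {μ : ℂ} (hμ : μ.re < 0) (k : ℕ) :
    Tendsto (fun t : ℝ => Complex.exp (μ * t) * (t : ℂ) ^ k) atTop (𝓝 0) := by
  have h := (isLittleO_pow_exp_pos_mul_atTop k (neg_pos.mpr hμ)).tendsto_div_nhds_zero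
  rw [tendsto_zero_iff_norm_tendsto_zero] at h ⊢
  refine h.congr fun t => ?_
  rw [norm_mul, norm_div, Complex.norm_exp, norm_pow, norm_pow, Complex.norm_real,
    Real.norm_of_nonneg (Real.exp_pos _).le, div_eq_mul_inv, ← Real.exp_neg, mul_comm]
  simp

lemma exists_isDecayingTrajectory_of_mem_maxGenEigenspace {f : Module.End ℂ E} {μ : ℂ}
    (hμ : μ.re < 0) {v : E} (hv : v ∈ f.maxGenEigenspace μ) :
    ∃ x : ℝ → E, IsDecayingTrajectory f x ∧ x 0 = v := by
  obtain ⟨N, hN⟩ := (f.mem_maxGenEigenspace μ v).mp hv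
  set g : Module.End ℂ E := f - μ • 1 with hg
  -- `p t = exp (t g) v`, where the exponential series stops because `g ^ N` kills `v`.
  let p : ℝ → E := fun t =>
    ∑ k ∈ Finset.range (N + 1), ((t : ℂ) ^ k / (k.factorial : ℂ)) • (g ^ k) v
  have hp (t : ℝ) : HasDerivAt p (g (p t)) t := by
    refine (hasDerivAt_sum_pow_div_factorial_smul (fun k => (g ^ k) v) N t).congr_deriv ?_
    simp [p, Finset.sum_range_succ, hN, pow_succ']
  have hexp (t : ℝ) :
      HasDerivAt (fun t : ℝ => Complex.exp (μ * t)) (Complex.exp (μ * t) * μ) t := by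
    simpa using ((hasDerivAt_id (t : ℂ)).const_mul μ).cexp.comp_ofReal
  refine ⟨fun t => Complex.exp (μ * t) • p t, ⟨fun t => ?_, ?_⟩, ?_⟩
  · refine ((hexp t).smul (hp t)).congr_deriv ?_
    have hf : f (p t) = g (p t) + μ • p t := by simp [hg]
    rw [map_smul, hf, smul_add, smul_smul]
  · have hterm (k : ℕ) : Tendsto
        (fun t : ℝ => (Complex.exp (μ * t) * ((t : ℂ) ^ k / (k.factorial : ℂ))) • (g ^ k) v)
        atTop (𝓝 0) := by
      simpa [mul_div_assoc] using
        ((tendsto_cexp_mul_pow_atTop_nhds_zero hμ k).div_const _).smul_const ((g ^ k) v)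
    simpa [p, Finset.smul_sum, smul_smul] using
      tendsto_finsetSum (Finset.range (N + 1)) fun k _ => hterm k
  · simp [p, Finset.sum_range_succ']

lemma exists_isDecayingTrajectory_of_mem_spectralSubspace {f : Module.End ℂ E} {S : Set ℂ}
    (hS : ∀ μ ∈ S, μ.re < 0) {v : E} (hv : v ∈ spectralSubspace f S) :
    ∃ x : ℝ → E, IsDecayingTrajectory f x ∧ x 0 = v := by
  rw [spectralSubspace, iSup_subtype'] at hv
  refine Submodule.iSup_induction _ (motive := fun v => ∃ x, IsDecayingTrajectory f x ∧ x 0 = v)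
    hv ?_ ?_ ?_
  · exact fun μ _ => exists_isDecayingTrajectory_of_mem_maxGenEigenspace (hS μ μ.2)
  · exact ⟨0, .zero, rfl⟩
  · rintro _ _ ⟨x, hx, rfl⟩ ⟨y, hy, rfl⟩
    exact ⟨x + y, hx.add hy, rfl⟩

end Trajectories

section ComplexLyapunov

open scoped ComplexOrder MatrixOrder

variable {ι : Type*} [Fintype ι]

lemma hasDerivAt_star_dotProduct_mulVec (M : Matrix ι ι ℂ) {x : ℝ → ι → ℂ} {x' : ι → ℂ} {t : ℝ}
    (hx : HasDerivAt x x' t) :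
    HasDerivAt (fun t => star (x t) ⬝ᵥ M *ᵥ x t)
      (star x' ⬝ᵥ M *ᵥ x t + star (x t) ⬝ᵥ M *ᵥ x') t := by
  have hxi := hasDerivAt_pi.mp hx
  have hMx (i : ι) : HasDerivAt (fun t => (M *ᵥ x t) i) ((M *ᵥ x') i) t :=
    HasDerivAt.fun_sum fun j _ => (hxi j).const_mul (M i j)
  simp only [dotProduct, ← Finset.sum_add_distrib]
  exact HasDerivAt.fun_sum fun i _ => (hxi i).star.mul (hMx i)

lemma star_dotProduct_mulVec_of_lyapunov {A X Q : Matrix ι ι ℂ}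
    (hlyap : Aᴴ * X + X * A + Q = 0) (v : ι → ℂ) :
    star (A *ᵥ v) ⬝ᵥ X *ᵥ v + star v ⬝ᵥ X *ᵥ (A *ᵥ v) = -(star v ⬝ᵥ Q *ᵥ v) := by
  rw [star_mulVec, ← dotProduct_mulVec, mulVec_mulVec, mulVec_mulVec, ← dotProduct_add,
    ← add_mulVec, eq_neg_of_add_eq_zero_left hlyap, neg_mulVec, dotProduct_neg]

lemma star_add_dotProduct_mulVec_add_of_mulVec_eq_zero {X : Matrix ι ι ℂ} (hX : X.IsHermitian)
    {u : ι → ℂ} (hu : X *ᵥ u = 0) (s : ι → ℂ) :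
    star (s + u) ⬝ᵥ X *ᵥ (s + u) = star s ⬝ᵥ X *ᵥ s := by
  have hu' : star u ᵥ* X = 0 := by rw [← hX.eq, ← star_mulVec, hu, star_zero]
  rw [mulVec_add, hu, add_zero, star_add, add_dotProduct, dotProduct_mulVec (star u), hu',
    zero_dotProduct, add_zero]

variable [DecidableEq ι]

-- Along `ẋ = A x` the value `x* X x` decreases, its derivative being `-x* Q x`, and tends to `0`.
lemma re_star_dotProduct_mulVec_nonneg_of_lyapunov {A X Q : Matrix ι ι ℂ} (hQ : Q.PosSemidef)
    (hlyap : Aᴴ * X + X * A + Q = 0) {x : ℝ → ι → ℂ}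
    (hx : IsDecayingTrajectory (toLin' A) x) (t : ℝ) : 0 ≤ (star (x t) ⬝ᵥ X *ᵥ x t).re := by
  have hderiv (t : ℝ) : HasDerivAt (fun t => (star (x t) ⬝ᵥ X *ᵥ x t).re)
      (-(star (x t) ⬝ᵥ Q *ᵥ x t).re) t := by
    have h := hasDerivAt_star_dotProduct_mulVec X (hx.hasDerivAt t)
    rw [toLin'_apply, star_dotProduct_mulVec_of_lyapunov hlyap] at h
    exact Complex.reCLM.hasFDerivAt.comp_hasDerivAt t h
  have hanti : Antitone fun t => (star (x t) ⬝ᵥ X *ᵥ x t).re :=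
    antitone_of_hasDerivAt_nonpos hderiv fun t =>
      neg_nonpos.mpr (Complex.le_def.mp (hQ.dotProduct_mulVec_nonneg (x t))).1
  have hcont : Continuous fun v : ι → ℂ => (star v ⬝ᵥ X *ᵥ v).re := by fun_prop
  have hlim : Tendsto (fun t => (star (x t) ⬝ᵥ X *ᵥ x t).re) atTop (𝓝 0) := by
    simpa [comp_def] using (hcont.tendsto 0).comp hx.tendsto_zero
  exact hanti.le_of_tendsto hlim t

lemma posSemidef_of_lyapunov {A X Q : Matrix ι ι ℂ} {S : Set ℂ} (hS : ∀ μ ∉ S, μ.re < 0)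
    (hQ : Q.PosSemidef) (hX : X.IsHermitian) (hlyap : Aᴴ * X + X * A + Q = 0)
    (hker : spectralSubspace (toLin' A) S ≤ LinearMap.ker (toLin' X)) : X.PosSemidef := by
  refine .of_dotProduct_mulVec_nonneg hX fun v => ?_
  obtain ⟨u, hu, s, hs, rfl⟩ : ∃ u ∈ spectralSubspace (toLin' A) S,
      ∃ s ∈ spectralSubspace (toLin' A) Sᶜ, u + s = v :=
    Submodule.mem_sup.mp (spectralSubspace_sup_compl (toLin' A) S ▸ Submodule.mem_top)
  obtain ⟨x, hx, rfl⟩ := exists_isDecayingTrajectory_of_mem_spectralSubspace hS hs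
  have hXu : X *ᵥ u = 0 := by simpa using hker hu
  refine Complex.nonneg_iff.mpr ⟨?_, (hX.im_star_dotProduct_mulVec_self _).symm⟩
  rw [add_comm, star_add_dotProduct_mulVec_add_of_mulVec_eq_zero hX hXu]
  exact re_star_dotProduct_mulVec_nonneg_of_lyapunov hQ hlyap hx 0

lemma eq_zero_of_lyapunov {A X : Matrix ι ι ℂ} {S : Set ℂ} (hS : ∀ μ ∉ S, μ.re < 0)
    (hX : X.IsHermitian) (hlyap : Aᴴ * X + X * A = 0)
    (hker : spectralSubspace (toLin' A) S ≤ LinearMap.ker (toLin' X)) : X = 0 := by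
  have hpos : X.PosSemidef :=
    posSemidef_of_lyapunov hS .zero hX (by rw [hlyap, add_zero]) hker
  have hneg : (-X).PosSemidef := by
    refine posSemidef_of_lyapunov (A := A) hS .zero hX.neg ?_ fun u hu => ?_
    · rw [mul_neg, neg_mul, ← neg_add, hlyap, neg_zero, add_zero]
    · simpa [neg_mulVec] using hker hu
  exact le_antisymm (neg_nonneg.mp hneg.nonneg) hpos.nonneg

end ComplexLyapunov

section Complexification

variable {ι κ l : Type*}

lemma cplx_add (M N : Matrix ι κ ℝ) : cplx (M + N) = cplx M + cplx N := by
  ext; simp [cplx]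

lemma cplx_smul (c : ℝ) (M : Matrix ι κ ℝ) : cplx (c • M) = c • cplx M := by
  ext; simp [cplx]

lemma cplx_zero : cplx (0 : Matrix ι κ ℝ) = 0 := by
  ext; simp [cplx]

lemma cplx_mul [Fintype κ] (M : Matrix ι κ ℝ) (N : Matrix κ l ℝ) :
    cplx (M * N) = cplx M * cplx N :=
  Matrix.map_mul (f := Complex.ofRealHom)

lemma cplx_transpose (M : Matrix ι κ ℝ) : cplx Mᵀ = (cplx M)ᴴ := by
  ext; simp [cplx]

lemma cplx_injective : Injective (cplx : Matrix ι κ ℝ → Matrix ι κ ℂ) :=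
  Matrix.map_injective Complex.ofReal_injective

lemma isHermitian_cplx {X : Matrix ι ι ℝ} (hX : X.IsSymm) : (cplx X).IsHermitian := by
  rw [IsHermitian, ← cplx_transpose, hX.eq]

lemma lyapunov_cplx [Fintype ι] {A X Q : Matrix ι ι ℝ} (h : Aᵀ * X + X * A + Q = 0) :
    (cplx A)ᴴ * cplx X + cplx X * cplx A + cplx Q = 0 := by
  simp only [← cplx_transpose, ← cplx_mul, ← cplx_add, h, cplx_zero]

open scoped ComplexOrder in
lemma posSemidef_of_posSemidef_cplx [Finite ι] {X : Matrix ι ι ℝ} (h : (cplx X).PosSemidef) :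
    X.PosSemidef := by
  cases nonempty_fintype ι
  refine .of_dotProduct_mulVec_nonneg ?_ fun v => ?_
  · exact (isHermitian_map_iff (fun r => (Complex.conj_ofReal r).symm)
      Complex.ofReal_injective).mp h.isHermitian
  · have hv : star (fun i => (v i : ℂ)) ⬝ᵥ cplx X *ᵥ (fun i => (v i : ℂ))
        = ((star v ⬝ᵥ X *ᵥ v : ℝ) : ℂ) := by
      simp [dotProduct, mulVec, cplx]
    exact Complex.zero_le_real.mp (hv ▸ h.dotProduct_mulVec_nonneg fun i => (v i : ℂ))

end Complexification

section RealLyapunov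

variable {ι κ : Type*} [Fintype ι] [DecidableEq ι]

/-- The Lyapunov operator `X ↦ AᵀX + XA` of a real matrix `A`. -/
def lyapunovMap (A : Matrix ι ι ℝ) : Matrix ι ι ℝ →ₗ[ℝ] Matrix ι ι ℝ :=
  LinearMap.mulLeft ℝ Aᵀ + LinearMap.mulRight ℝ A

lemma lyapunovMap_apply (A X : Matrix ι ι ℝ) : lyapunovMap A X = Aᵀ * X + X * A := rfl

/-- The real symmetric matrices whose complexification vanishes on a complex subspace `U`; for `U`
the generalized unstable subspace this is the space in which the Lyapunov equation is solved. -/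
def symmVanishingOn (U : Submodule ℂ (ι → ℂ)) : Submodule ℝ (Matrix ι ι ℝ) where
  carrier := {X | X.IsSymm ∧ U ≤ LinearMap.ker (toLin' (cplx X))}
  add_mem' {X Y} hX hY := ⟨hX.1.add hY.1, fun u hu => by
    have hXu : cplx X *ᵥ u = 0 := hX.2 hu
    have hYu : cplx Y *ᵥ u = 0 := hY.2 hu
    simp [cplx_add, hXu, hYu]⟩
  zero_mem' := ⟨isSymm_zero, by simp [cplx_zero]⟩
  smul_mem' c X hX := ⟨hX.1.smul c, fun u hu => by
    have hXu : cplx X *ᵥ u = 0 := hX.2 hu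
    simp [cplx_smul, smul_mulVec, hXu]⟩

lemma lyapunovMap_mem_symmVanishingOn {A X : Matrix ι ι ℝ} {U : Submodule ℂ (ι → ℂ)}
    (hU : ∀ u ∈ U, toLin' (cplx A) u ∈ U) (hX : X ∈ symmVanishingOn U) :
    lyapunovMap A X ∈ symmVanishingOn U := by
  rw [lyapunovMap_apply]
  refine ⟨?_, fun u hu => ?_⟩
  · rw [IsSymm, transpose_add, transpose_mul, transpose_mul, transpose_transpose, hX.1.eq, add_comm]
  · have hXu : toLin' (cplx X) u = 0 := hX.2 hu
    have hXAu : toLin' (cplx X) (toLin' (cplx A) u) = 0 := hX.2 (hU u hu)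
    rw [LinearMap.mem_ker, cplx_add, cplx_mul, cplx_mul, map_add, LinearMap.add_apply,
      toLin'_mul_apply, toLin'_mul_apply, hXu, hXAu, map_zero, add_zero]

lemma transpose_mul_self_mem_symmVanishingOn [Fintype κ] {C : Matrix κ ι ℝ}
    {U : Submodule ℂ (ι → ℂ)} (hC : U ≤ LinearMap.ker (toLin' (cplx C))) :
    Cᵀ * C ∈ symmVanishingOn U := by
  refine ⟨by rw [IsSymm, transpose_mul, transpose_transpose], fun u hu => ?_⟩
  have hCu : cplx C *ᵥ u = 0 := hC hu
  simp [cplx_mul, ← mulVec_mulVec, hCu]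

variable {A : Matrix ι ι ℝ} {S : Set ℂ}

open scoped ComplexOrder in
lemma posSemidef_of_mem_symmVanishingOn [Fintype κ] {C : Matrix κ ι ℝ} {X : Matrix ι ι ℝ}
    (hS : ∀ μ ∉ S, μ.re < 0) (hX : X ∈ symmVanishingOn (spectralSubspace (toLin' (cplx A)) S))
    (hlyap : Aᵀ * X + X * A + Cᵀ * C = 0) : X.PosSemidef := by
  have hQ : (cplx (Cᵀ * C)).PosSemidef := by
    rw [cplx_mul, cplx_transpose]
    exact posSemidef_conjTranspose_mul_self _
  exact posSemidef_of_posSemidef_cplx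
    (posSemidef_of_lyapunov hS hQ (isHermitian_cplx hX.1) (lyapunov_cplx hlyap) hX.2)

lemma disjoint_symmVanishingOn_ker_lyapunovMap (hS : ∀ μ ∉ S, μ.re < 0) :
    Disjoint (symmVanishingOn (spectralSubspace (toLin' (cplx A)) S))
      (LinearMap.ker (lyapunovMap A)) := by
  refine Submodule.disjoint_def.mpr fun X hX hAX => cplx_injective ?_
  have hlyap : Aᵀ * X + X * A + 0 = 0 := by
    rw [add_zero, ← lyapunovMap_apply, LinearMap.mem_ker.mp hAX]
  rw [cplx_zero]
  refine eq_zero_of_lyapunov hS (isHermitian_cplx hX.1) ?_ hX.2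
  simpa [cplx_zero] using lyapunov_cplx hlyap

lemma exists_mem_symmVanishingOn_lyapunovMap_eq (hS : ∀ μ ∉ S, μ.re < 0) {Q : Matrix ι ι ℝ}
    (hQ : Q ∈ symmVanishingOn (spectralSubspace (toLin' (cplx A)) S)) :
    ∃ X ∈ symmVanishingOn (spectralSubspace (toLin' (cplx A)) S), lyapunovMap A X = Q := by
  have hmaps : ∀ X ∈ symmVanishingOn (spectralSubspace (toLin' (cplx A)) S),
      lyapunovMap A X ∈ symmVanishingOn (spectralSubspace (toLin' (cplx A)) S) :=
    fun X => lyapunovMap_mem_symmVanishingOn fun u => map_mem_spectralSubspace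
  have hinj : Injective ((lyapunovMap A).restrict hmaps) :=
    (LinearMap.injective_restrict_iff hmaps).mpr (disjoint_symmVanishingOn_ker_lyapunovMap hS)
  obtain ⟨⟨X, hX⟩, hXQ⟩ := LinearMap.surjective_of_injective hinj ⟨Q, hQ⟩
  exact ⟨X, hX, congrArg Subtype.val hXQ⟩

end RealLyapunov

theorem stmt0_general {ι κ : Type*} [Fintype ι] [DecidableEq ι] [Fintype κ] (A : Matrix ι ι ℝ)
    (C : Matrix κ ι ℝ) {S : Set ℂ} (hS : ∀ μ ∉ S, μ.re < 0)
    (hC : spectralSubspace (toLin' (cplx A)) S ≤ LinearMap.ker (toLin' (cplx C))) :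
    ∃ X : Matrix ι ι ℝ, (X.IsSymm ∧ X.PosSemidef ∧ Aᵀ * X + X * A + Cᵀ * C = 0 ∧
        spectralSubspace (toLin' (cplx A)) S ≤ LinearMap.ker (toLin' (cplx X))) ∧
      ∀ Y : Matrix ι ι ℝ, Y.IsSymm → Aᵀ * Y + Y * A + Cᵀ * C = 0 →
        spectralSubspace (toLin' (cplx A)) S ≤ LinearMap.ker (toLin' (cplx Y)) → Y = X := by
  obtain ⟨X, hX, hAX⟩ := exists_mem_symmVanishingOn_lyapunovMap_eq hS
    (neg_mem (transpose_mul_self_mem_symmVanishingOn hC))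
  have hlyap : Aᵀ * X + X * A + Cᵀ * C = 0 := add_eq_zero_iff_eq_neg.mpr hAX
  refine ⟨X, ⟨hX.1, posSemidef_of_mem_symmVanishingOn hS hX hlyap, hlyap, hX.2⟩, ?_⟩
  intro Y hY hlyapY hkerY
  exact LinearMap.disjoint_ker_iff_injOn.mp (disjoint_symmVanishingOn_ker_lyapunovMap hS)
    ⟨hY, hkerY⟩ hX ((add_eq_zero_iff_eq_neg.mp hlyapY).trans hAX.symm)

/-- Existence of a PSD solution of the Lyapunov equation
`AᵀX + XA + CᵀC = 0` when `X₊(A) ⊆ ker C`, and uniqueness of the PSD solution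
satisfying `X₊(A) ⊆ ker X`. -/
theorem stmt0 {n m p : ℕ} (A : Matrix (Fin n) (Fin n) ℝ) (B : Matrix (Fin n) (Fin m) ℝ)
    (C : Matrix (Fin p) (Fin n) ℝ)
    (hC : unstableSubspace A ≤ LinearMap.ker (Matrix.toLin' (cplx C))) :
    (∃ X : Matrix (Fin n) (Fin n) ℝ, X.IsSymm ∧ X.PosSemidef ∧
        Aᵀ * X + X * A + Cᵀ * C = 0) ∧
    (∃! X : Matrix (Fin n) (Fin n) ℝ, X.IsSymm ∧ X.PosSemidef ∧
        Aᵀ * X + X * A + Cᵀ * C = 0 ∧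
        unstableSubspace A ≤ LinearMap.ker (Matrix.toLin' (cplx X))) := by
  obtain ⟨X, ⟨hsymm, hpos, hlyap, hker⟩, huniq⟩ := stmt0_general A C (fun _ => not_le.mp) hC
  exact ⟨⟨X, hsymm, hpos, hlyap⟩, X, ⟨hsymm, hpos, hlyap, hker⟩,
    fun Y ⟨hY, _, hlyapY, hkerY⟩ => huniq Y hY hlyapY hkerY⟩
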